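/- Let α ∈ (0, 1−a) and x₀ ∈ ℝ^n with |x₀| < 1. There exists a constant C ≥ 1, depending only on n, a and α, such that the function B(x,y) = (|x−x₀|² + y²)^{α/2} + C y^α satisfies ΔB(x,y) + (a/y) ∂_y B(x,y) ≤ 0 at every point (x,y) ∈ ℝ^n × (0,1) (equivalently, div(y^a ∇B) ≤ 0 there). -/

import Mathlib

open Set Filter Topology MeasureTheory
open scoped RealInnerProductSpace

noncomputable section

abbrev En (n : ℕ) := EuclideanSpace ℝ (Fin n)

/-- The open upper half ball `B_r^+`. -/
def halfBall (n : ℕ) (r : ℝ) : Set (En n × ℝ) :=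
  {p | ‖p.1‖ ^ 2 + p.2 ^ 2 < r ^ 2 ∧ 0 < p.2}

/-- The closure of the upper half ball. -/
def closedHalfBall (n : ℕ) (r : ℝ) : Set (En n × ℝ) :=
  {p | ‖p.1‖ ^ 2 + p.2 ^ 2 ≤ r ^ 2 ∧ 0 ≤ p.2}

/-- `B_r^+ ∪ B_r^0`. -/
def halfBallWithBase (n : ℕ) (r : ℝ) : Set (En n × ℝ) :=
  {p | ‖p.1‖ ^ 2 + p.2 ^ 2 < r ^ 2 ∧ 0 ≤ p.2}

/-- The flat ball `B_r^0` in `ℝⁿ`. -/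
def flatBall (n : ℕ) (r : ℝ) : Set (En n) := {x | ‖x‖ < r}

/-- `(∂B_1)^+`. -/
def spherePlus (n : ℕ) : Set (En n × ℝ) := {p | ‖p.1‖ ^ 2 + p.2 ^ 2 = 1 ∧ 0 < p.2}

/-- closure of `(∂B_1)^+`. -/
def closedSpherePlus (n : ℕ) : Set (En n × ℝ) := {p | ‖p.1‖ ^ 2 + p.2 ^ 2 = 1 ∧ 0 ≤ p.2}

/-- Second directional derivative of `u` at `p` in direction `v`. -/
def D2 {n : ℕ} (u : En n × ℝ → ℝ) (p v : En n × ℝ) : ℝ :=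
  fderiv ℝ (fun q => fderiv ℝ u q v) p v

/-- The Laplacian in the `n+1` variables `(x, y)`. -/
def lap {n : ℕ} (u : En n × ℝ → ℝ) (p : En n × ℝ) : ℝ :=
  (∑ i : Fin n, D2 u p (EuclideanSpace.single i 1, 0)) + D2 u p (0, 1)

/-- `u` is `a`-harmonic on `Ω`: it is `C²` there and `Δu + (a/y) ∂_y u = 0`. -/
def IsAHarmonicOn {n : ℕ} (a : ℝ) (u : En n × ℝ → ℝ) (Ω : Set (En n × ℝ)) : Prop :=
  ContDiffOn ℝ 2 u Ω ∧ ∀ p ∈ Ω, lap u p + (a / p.2) * fderiv ℝ u p (0, 1) = 0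

/-- `lim_{y → 0⁺} y^a ∂_y w(x, y) = L`. -/
def NormalDerivLimit {n : ℕ} (a : ℝ) (w : En n × ℝ → ℝ) (x : En n) (L : ℝ) : Prop :=
  Tendsto (fun y : ℝ => y ^ a * fderiv ℝ w (x, y) (0, 1)) (𝓝[>] (0 : ℝ)) (𝓝 L)

/-- The boundary-restriction `(t, x) ↦ u(t, x, 0)`. -/
def bdryFun {n : ℕ} (u : ℝ → En n × ℝ → ℝ) : ℝ × En n → ℝ := fun q => u q.1 (q.2, 0)

/-- A classical solution of the extended drift–diffusion equation on
`[-1,0] × closure (B_1^+)` with drift `b` and right-hand side `f`. -/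
def IsExtDDSolution {n : ℕ} (a : ℝ) (b : ℝ → En n → En n) (f : ℝ → En n → ℝ)
    (u : ℝ → En n × ℝ → ℝ) : Prop :=
  ContinuousOn (fun q : ℝ × (En n × ℝ) => u q.1 q.2) (Icc (-1 : ℝ) 0 ×ˢ closedHalfBall n 1) ∧
  (∀ t ∈ Icc (-1 : ℝ) 0, IsAHarmonicOn a (u t) (halfBall n 1)) ∧
  (∀ q ∈ Ioc (-1 : ℝ) 0 ×ˢ flatBall n 1,
      DifferentiableWithinAt ℝ (bdryFun u) (Ioc (-1 : ℝ) 0 ×ˢ flatBall n 1) q) ∧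
  (∀ t x, (t, x) ∈ Ioc (-1 : ℝ) 0 ×ˢ flatBall n 1 →
      ∃ L : ℝ, NormalDerivLimit a (u t) x L ∧
        fderivWithin ℝ (bdryFun u) (Ioc (-1 : ℝ) 0 ×ˢ flatBall n 1) (t, x) (1, 0) +
          fderivWithin ℝ (bdryFun u) (Ioc (-1 : ℝ) 0 ×ˢ flatBall n 1) (t, x) (0, b t x) -
          L = f t x)

/-- A classical solution of the localized fractional heat equation on
`[-1,0] × closure (B_1^+)`. -/
def IsFracHeatSolution {n : ℕ} (a : ℝ) (u : ℝ → En n × ℝ → ℝ) : Prop :=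
  ContinuousOn (fun q : ℝ × (En n × ℝ) => u q.1 q.2) (Icc (-1 : ℝ) 0 ×ˢ closedHalfBall n 1) ∧
  (∀ t ∈ Icc (-1 : ℝ) 0, IsAHarmonicOn a (u t) (halfBall n 1)) ∧
  (∀ t ∈ Ioc (-1 : ℝ) 0, ∀ x ∈ flatBall n 1,
      DifferentiableWithinAt ℝ (fun τ => u τ (x, 0)) (Ioc (-1 : ℝ) 0) t ∧
      NormalDerivLimit a (u t) x (derivWithin (fun τ => u τ (x, 0)) (Ioc (-1 : ℝ) 0) t))

/-!
Write `L_a = Δ + (a/y) ∂_y`, and let `R = |x - x₀|² + y²`. The chain rule for powers,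
`L_a (f ^ β) = β f ^ (β - 1) L_a f + β (β - 1) f ^ (β - 2) |∇f|²`, applied to `f = R` and `f = y`
gives

* `L_a (R ^ (α/2)) = α (α + n - 1 + a) R ^ (α/2 - 1)`,
* `L_a (y ^ α) = -α (1 - a - α) y ^ (α - 2)`.

Since `α < 1 - a`, the second is negative and the coefficient of the first is at most `α n`. As
`R ≥ y²` and `α ≤ 2`, the first is then at most `α n y ^ (α - 2)`, which a large multiple of the
second absorbs.
-/

section Calculus

variable {E F : Type*} [NormedAddCommGroup E] [NormedSpace ℝ E]
  [NormedAddCommGroup F] [NormedSpace ℝ F] {p : E}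

lemma eventually_differentiableAt {f : E → F} (hf : ContDiffAt ℝ 1 f p) :
    ∀ᶠ q in 𝓝 p, DifferentiableAt ℝ f q :=
  (hf.eventually (by simp)).mono fun _ hq => hq.differentiableAt one_ne_zero

lemma differentiableAt_fderiv_apply {f : E → F} (hf : ContDiffAt ℝ 2 f p) (v : E) :
    DifferentiableAt ℝ (fun q => fderiv ℝ f q v) p :=
  ((hf.fderiv_right (m := 1) one_add_one_eq_two.le).differentiableAt one_ne_zero).clm_apply
    (differentiableAt_const v)

lemma fderiv_const_mul_apply (c : ℝ) (f : E → ℝ) (p v : E) :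
    fderiv ℝ (fun q => c * f q) p v = c * fderiv ℝ f p v :=
  DFunLike.congr_fun (congr_fun (fderiv_const_smul_field c) p) v

lemma fderiv_rpow_apply {f : E → ℝ} (hf : DifferentiableAt ℝ f p) (hp : f p ≠ 0) (β : ℝ) (v : E) :
    fderiv ℝ (fun q => f q ^ β) p v = β * f p ^ (β - 1) * fderiv ℝ f p v := by
  rw [(hf.hasFDerivAt.rpow_const (Or.inl hp)).fderiv]
  rfl

end Calculus

section SecondDerivative

variable {n : ℕ} {f g : En n × ℝ → ℝ} {p : En n × ℝ}

lemma D2_add (hf : ContDiffAt ℝ 2 f p) (hg : ContDiffAt ℝ 2 g p) (v : En n × ℝ) :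
    D2 (fun q => f q + g q) p v = D2 f p v + D2 g p v := by
  have hfirst : (fun q => fderiv ℝ (fun q => f q + g q) q v) =ᶠ[𝓝 p]
      fun q => fderiv ℝ f q v + fderiv ℝ g q v := by
    filter_upwards [eventually_differentiableAt (hf.of_le one_le_two),
      eventually_differentiableAt (hg.of_le one_le_two)] with q hfq hgq
    rw [fderiv_fun_add hfq hgq, add_apply]
  rw [D2, hfirst.fderiv_eq,
    fderiv_fun_add (differentiableAt_fderiv_apply hf v) (differentiableAt_fderiv_apply hg v)]
  rfl

lemma D2_const_mul (c : ℝ) (f : En n × ℝ → ℝ) (p v : En n × ℝ) :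
    D2 (fun q => c * f q) p v = c * D2 f p v := by
  simp only [D2, fderiv_const_mul_apply]

lemma D2_rpow (hf : ContDiffAt ℝ 2 f p) (hp : f p ≠ 0) (β : ℝ) (v : En n × ℝ) :
    D2 (fun q => f q ^ β) p v =
      β * f p ^ (β - 1) * D2 f p v + β * (β - 1) * f p ^ (β - 2) * fderiv ℝ f p v ^ 2 := by
  have hfirst : (fun q => fderiv ℝ (fun q => f q ^ β) q v) =ᶠ[𝓝 p]
      fun q => β * f q ^ (β - 1) * fderiv ℝ f q v := by
    filter_upwards [eventually_differentiableAt (hf.of_le one_le_two),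
      hf.continuousAt.eventually_ne hp] with q hfq hq using fderiv_rpow_apply hfq hq β v
  have hpow := ((hf.differentiableAt two_ne_zero).hasFDerivAt.rpow_const
    (p := β - 1) (Or.inl hp)).const_mul β
  rw [D2, hfirst.fderiv_eq,
    fderiv_fun_mul hpow.differentiableAt (differentiableAt_fderiv_apply hf v), hpow.fderiv]
  have hexp : β - 1 - 1 = β - 2 := by ring
  simp only [D2, hexp, add_apply, smul_apply, smul_eq_mul]
  ring

end SecondDerivative

section WeightedLaplacian

variable {n : ℕ} {f g : En n × ℝ → ℝ} {p : En n × ℝ}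

/-- The operator `L_a u = Δu + (a/y) ∂_y u` of the extension problem, equal to
`y^{-a} div(y^a ∇u)` for `y > 0`. At `y = 0` Lean's division makes it the Laplacian. -/
def weightedLap (a : ℝ) (u : En n × ℝ → ℝ) (p : En n × ℝ) : ℝ :=
  lap u p + (a / p.2) * fderiv ℝ u p (0, 1)

/-- The squared Euclidean length `|∇u|²` of the gradient in the variables `(x, y)`. It is written in
coordinates because `En n × ℝ` carries the sup norm. -/
def gradSq (u : En n × ℝ → ℝ) (p : En n × ℝ) : ℝ :=
  (∑ i : Fin n, fderiv ℝ u p (EuclideanSpace.single i 1, 0) ^ 2) + fderiv ℝ u p (0, 1) ^ 2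

lemma weightedLap_add (hf : ContDiffAt ℝ 2 f p) (hg : ContDiffAt ℝ 2 g p) (a : ℝ) :
    weightedLap a (fun q => f q + g q) p = weightedLap a f p + weightedLap a g p := by
  simp only [weightedLap, lap, D2_add hf hg, Finset.sum_add_distrib,
    fderiv_fun_add (hf.differentiableAt two_ne_zero) (hg.differentiableAt two_ne_zero), add_apply]
  ring

lemma weightedLap_const_mul (a c : ℝ) (f : En n × ℝ → ℝ) (p : En n × ℝ) :
    weightedLap a (fun q => c * f q) p = c * weightedLap a f p := by
  simp only [weightedLap, lap, D2_const_mul, ← Finset.mul_sum, fderiv_const_mul_apply]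
  ring

lemma weightedLap_rpow (hf : ContDiffAt ℝ 2 f p) (hp : f p ≠ 0) (a β : ℝ) :
    weightedLap a (fun q => f q ^ β) p =
      β * f p ^ (β - 1) * weightedLap a f p + β * (β - 1) * f p ^ (β - 2) * gradSq f p := by
  simp only [weightedLap, lap, gradSq, D2_rpow hf hp, Finset.sum_add_distrib, ← Finset.mul_sum,
    fderiv_rpow_apply (hf.differentiableAt two_ne_zero) hp]
  ring

end WeightedLaplacian

section Height

variable {n : ℕ} {p : En n × ℝ}

lemma fderiv_snd_apply (p v : En n × ℝ) :
    fderiv ℝ (fun q : En n × ℝ => q.2) p v = v.2 := by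
  rw [fderiv_snd]
  rfl

lemma weightedLap_snd (a : ℝ) (p : En n × ℝ) :
    weightedLap a (fun q : En n × ℝ => q.2) p = a / p.2 := by
  simp [weightedLap, lap, D2, fderiv_snd_apply]

lemma gradSq_snd (p : En n × ℝ) : gradSq (fun q : En n × ℝ => q.2) p = 1 := by
  simp [gradSq, fderiv_snd_apply]

lemma weightedLap_snd_rpow (hp : p.2 ≠ 0) (a α : ℝ) :
    weightedLap a (fun q : En n × ℝ => q.2 ^ α) p = -(α * (1 - a - α) * p.2 ^ (α - 2)) := by
  have hpow : p.2 ^ (α - 1) = p.2 ^ (α - 2) * p.2 := by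
    rw [← Real.rpow_add_one hp]
    ring_nf
  rw [weightedLap_rpow contDiffAt_snd hp, weightedLap_snd, gradSq_snd, hpow]
  field_simp
  ring

end Height

section SquaredDistance

variable {n : ℕ} {p : En n × ℝ}

/-- The squared Euclidean distance `|X - (x₀, 0)|²` from `X = q` to a point of the flat boundary. -/
def sqDist (x₀ : En n) (q : En n × ℝ) : ℝ := ‖q.1 - x₀‖ ^ 2 + q.2 ^ 2

lemma sqDist_pos (x₀ : En n) (hp : p.2 ≠ 0) : 0 < sqDist x₀ p := by
  unfold sqDist
  positivity

lemma contDiff_sqDist {m : WithTop ℕ∞} (x₀ : En n) : ContDiff ℝ m (sqDist x₀) :=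
  ((contDiff_fst.sub contDiff_const).norm_sq ℝ).add (contDiff_snd.pow 2)

lemma fderiv_sqDist_apply (x₀ : En n) (p v : En n × ℝ) :
    fderiv ℝ (sqDist x₀) p v = 2 * (inner ℝ (p.1 - x₀) v.1 + p.2 * v.2) := by
  have hsum : HasFDerivAt (sqDist x₀) _ p :=
    (hasFDerivAt_fst.sub_const x₀).norm_sq.add (hasFDerivAt_snd.pow 2)
  rw [hsum.fderiv]
  simp only [map_sub, ContinuousLinearMap.sub_comp, Nat.add_one_sub_one, pow_one, nsmul_eq_mul,
    Nat.cast_ofNat, add_apply, smul_apply, sub_apply, ContinuousLinearMap.comp_apply,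
    ContinuousLinearMap.coe_fst', coe_innerSL_apply, ContinuousLinearMap.coe_snd', smul_eq_mul,
    inner_sub_left]
  ring

lemma D2_sqDist (x₀ : En n) (p v : En n × ℝ) :
    D2 (sqDist x₀) p v = 2 * (‖v.1‖ ^ 2 + v.2 ^ 2) := by
  have hlin :=
    ((hasFDerivAt_fst (p := p)).sub_const x₀ |>.inner ℝ (hasFDerivAt_const v.1 p)).fun_add
      (hasFDerivAt_snd.mul_const v.2)
  simp only [D2, fderiv_sqDist_apply, fderiv_const_mul_apply]
  rw [hlin.fderiv]
  simp only [add_apply, ContinuousLinearMap.comp_apply, ContinuousLinearMap.prod_apply,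
    ContinuousLinearMap.coe_fst', zero_apply, fderivInnerCLM_apply, inner_zero_right,
    real_inner_self_eq_norm_sq, zero_add, smul_apply, ContinuousLinearMap.coe_snd', smul_eq_mul]
  ring

lemma weightedLap_sqDist (x₀ : En n) (hp : p.2 ≠ 0) (a : ℝ) :
    weightedLap a (sqDist x₀) p = 2 * (n + 1 + a) := by
  have hhoriz (i : Fin n) : D2 (sqDist x₀) p (EuclideanSpace.single i 1, 0) = 2 := by
    simp [D2_sqDist]
  have hvert : D2 (sqDist x₀) p (0, 1) = 2 := by simp [D2_sqDist]
  have hdy : fderiv ℝ (sqDist x₀) p (0, 1) = 2 * p.2 := by simp [fderiv_sqDist_apply]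
  simp only [weightedLap, lap, hhoriz, hvert, hdy, Finset.sum_const, Finset.card_univ,
    Fintype.card_fin, nsmul_eq_mul]
  field_simp

lemma gradSq_sqDist (x₀ : En n) (p : En n × ℝ) : gradSq (sqDist x₀) p = 4 * sqDist x₀ p := by
  simp only [gradSq, fderiv_sqDist_apply, EuclideanSpace.inner_single_right, sqDist,
    EuclideanSpace.real_norm_sq_eq, mul_pow, ← Finset.mul_sum, inner_zero_right, conj_trivial,
    one_mul, mul_one, mul_zero, add_zero, zero_add]
  ring

lemma weightedLap_sqDist_rpow (x₀ : En n) (hp : p.2 ≠ 0) (a β : ℝ) :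
    weightedLap a (fun q => sqDist x₀ q ^ β) p =
      2 * β * (2 * β + n - 1 + a) * sqDist x₀ p ^ (β - 1) := by
  have hR : sqDist x₀ p ≠ 0 := (sqDist_pos x₀ hp).ne'
  have hpow : sqDist x₀ p ^ (β - 1) = sqDist x₀ p ^ (β - 2) * sqDist x₀ p := by
    rw [← Real.rpow_add_one hR]
    ring_nf
  rw [weightedLap_rpow (contDiff_sqDist x₀).contDiffAt hR, weightedLap_sqDist x₀ hp,
    gradSq_sqDist, hpow]
  ring

lemma sqDist_rpow_le (x₀ : En n) (hp : 0 < p.2) {β : ℝ} (hβ : β ≤ 0) :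
    sqDist x₀ p ^ β ≤ p.2 ^ (2 * β) :=
  calc sqDist x₀ p ^ β
      ≤ (p.2 ^ 2) ^ β :=
        Real.rpow_le_rpow_of_nonpos (by positivity) (le_add_of_nonneg_left (by positivity)) hβ
    _ = p.2 ^ (2 * β) := mod_cast (Real.rpow_natCast_mul hp.le 2 β).symm

end SquaredDistance

lemma weightedLap_barrier {n : ℕ} (x₀ : En n) {p : En n × ℝ} (hp : p.2 ≠ 0) (a α C : ℝ) :
    weightedLap a (fun q => sqDist x₀ q ^ (α / 2) + C * q.2 ^ α) p =
      α * ((α + n - 1 + a) * sqDist x₀ p ^ (α / 2 - 1) -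
        C * (1 - a - α) * p.2 ^ (α - 2)) := by
  have hR : ContDiffAt ℝ 2 (fun q => sqDist x₀ q ^ (α / 2)) p :=
    (contDiff_sqDist x₀).contDiffAt.rpow_const_of_ne (sqDist_pos x₀ hp).ne'
  have hy : ContDiffAt ℝ 2 (fun q : En n × ℝ => C * q.2 ^ α) p :=
    contDiffAt_const.mul (contDiffAt_snd.rpow_const_of_ne hp)
  rw [weightedLap_add hR hy, weightedLap_const_mul, weightedLap_sqDist_rpow x₀ hp,
    weightedLap_snd_rpow hp]
  ring_nf

lemma weightedLap_barrier_nonpos {n : ℕ} (x₀ : En n) {p : En n × ℝ} (hp : 0 < p.2)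
    {a α C : ℝ} (hα₀ : 0 ≤ α) (hα₂ : α ≤ 2) (hαa : α ≤ 1 - a) (hC : n ≤ C * (1 - a - α)) :
    weightedLap a (fun q => sqDist x₀ q ^ (α / 2) + C * q.2 ^ α) p ≤ 0 := by
  have hcompare : sqDist x₀ p ^ (α / 2 - 1) ≤ p.2 ^ (α - 2) := by
    convert sqDist_rpow_le x₀ hp (β := α / 2 - 1) (by linarith) using 2
    ring
  have habsorb : (α + n - 1 + a) * sqDist x₀ p ^ (α / 2 - 1) ≤
      C * (1 - a - α) * p.2 ^ (α - 2) :=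
    calc (α + n - 1 + a) * sqDist x₀ p ^ (α / 2 - 1)
        ≤ n * sqDist x₀ p ^ (α / 2 - 1) :=
          mul_le_mul_of_nonneg_right (by linarith) (Real.rpow_nonneg (sqDist_pos x₀ hp.ne').le _)
      _ ≤ n * p.2 ^ (α - 2) := mul_le_mul_of_nonneg_left hcompare n.cast_nonneg
      _ ≤ C * (1 - a - α) * p.2 ^ (α - 2) :=
          mul_le_mul_of_nonneg_right hC (Real.rpow_nonneg hp.le _)
  rw [weightedLap_barrier x₀ hp.ne']
  exact mul_nonpos_of_nonneg_of_nonpos hα₀ (sub_nonpos.mpr habsorb)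

theorem barrier_for_flat_boundary_general (n : ℕ) {a α : ℝ} (hα₀ : 0 ≤ α) (hα₂ : α ≤ 2)
    (hαa : α < 1 - a) :
    ∃ C ≥ (1 : ℝ), ∀ (x₀ : En n) (p : En n × ℝ), 0 < p.2 →
      lap (fun q : En n × ℝ => (‖q.1 - x₀‖ ^ 2 + q.2 ^ 2) ^ (α / 2) + C * q.2 ^ α) p +
        (a / p.2) * fderiv ℝ (fun q : En n × ℝ =>
          (‖q.1 - x₀‖ ^ 2 + q.2 ^ 2) ^ (α / 2) + C * q.2 ^ α) p (0, 1) ≤ 0 := by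
  have hgap : 0 < 1 - a - α := by linarith
  exact ⟨max 1 (n / (1 - a - α)), le_max_left _ _, fun x₀ p hp =>
    weightedLap_barrier_nonpos x₀ hp hα₀ hα₂ hαa.le
      ((div_le_iff₀ hgap).mp (le_max_right _ _))⟩

/-- **Lemma 4.3 (barrier for `B_1^0`).** For `α ∈ (0, 1-a)` and `|x₀| < 1` there is `C ≥ 1`,
depending only on `n`, `a` and `α`, such that `B(x,y) = |X-(x₀,0)|^α + C y^α` is a
supersolution of `div(y^a ∇B) ≤ 0` for `0 < y < 1` (here `a = 1-2s`, `1-a = 2s`). -/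
theorem barrier_for_flat_boundary (n : ℕ) (hn : 1 ≤ n) (s : ℝ)
    (hs : s ∈ Ioo (0 : ℝ) (1/2)) (α : ℝ) (hα : α ∈ Ioo (0 : ℝ) (2*s)) :
    ∃ C ≥ (1 : ℝ), ∀ (x₀ : En n), ‖x₀‖ < 1 →
      ∀ p : En n × ℝ, 0 < p.2 → p.2 < 1 →
        lap (fun q : En n × ℝ =>
            (‖q.1 - x₀‖^2 + q.2^2) ^ (α/2) + C * q.2 ^ α) p +
          ((1 - 2*s) / p.2) *
            fderiv ℝ (fun q : En n × ℝ =>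
              (‖q.1 - x₀‖^2 + q.2^2) ^ (α/2) + C * q.2 ^ α) p (0, 1) ≤ 0 := by
  obtain ⟨C, hC, hB⟩ := barrier_for_flat_boundary_general n (a := 1 - 2 * s) hα.1.le
    (by linarith [hα.2, hs.2]) (by linarith [hα.2])
  exact ⟨C, hC, fun x₀ _ p hp _ => hB x₀ p hp⟩

end
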